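/- arXiv:math/9809185 — 2 statements merged into one kernel-verified Lean document; each statement's English description precedes it below -/
import Mathlib

section
/- Let p ≥ 2 and let x ∈ F(p) have normal form x = x_{i₁}^{r₁}⋯x_{iₙ}^{rₙ}·x_{jₘ}^{-sₘ}⋯x_{j₁}^{-s₁}. Then the normal form is a shortest word representing x in the infinite generating set {x_i : i ∈ ℕ}: every word in the generators x_i (i ∈ ℕ) and their inverses that represents x has length at least r₁+⋯+rₙ + s₁+⋯+sₘ. In particular, |x|_p ≥ r₁+⋯+rₙ + s₁+⋯+sₘ. -/
open scoped BigOperators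

/-- Relators of Thompson's group `F(p)`: `x_i⁻¹ x_j x_i x_{j+p-1}⁻¹` for `i < j`. -/
def thompsonRels (p : ℕ) : Set (FreeGroup ℕ) :=
  { rel | ∃ i j : ℕ, i < j ∧
      rel = (FreeGroup.of i)⁻¹ * FreeGroup.of j * FreeGroup.of i *
        (FreeGroup.of (j + p - 1))⁻¹ }

/-- Thompson's group `F(p)`, presented with generators `x_i` (`i : ℕ`) and relations
`x_i⁻¹ · x_j · x_i = x_{j+p-1}` for `i < j`. -/
def FP (p : ℕ) : Type := PresentedGroup (thompsonRels p)

instance (p : ℕ) : Group (FP p) :=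
  inferInstanceAs (Group (PresentedGroup (thompsonRels p)))

/-- The generator `x_i` of `F(p)`. -/
def xg (p : ℕ) (i : ℕ) : FP p := PresentedGroup.of (rels := thompsonRels p) i

/-- Word length of `x : G` with respect to a set `S` of generators: the least length of a
word in elements of `S ∪ S⁻¹` whose product is `x`. -/
noncomputable def wordLength {G : Type*} [Group G] (S : Set G) (x : G) : ℕ :=
  sInf { n : ℕ | ∃ w : List G, w.length = n ∧ (∀ g ∈ w, g ∈ S ∨ g⁻¹ ∈ S) ∧ w.prod = x }

/-- The word length `|x|_p` on `F(p)`, with respect to the generators `x_0, …, x_{p-1}`. -/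
noncomputable def wlen (p : ℕ) (x : FP p) : ℕ :=
  wordLength { g : FP p | ∃ i, i < p ∧ g = xg p i } x

/-- The data of a candidate normal form
`x_{i₁}^{r₁} ⋯ x_{iₙ}^{rₙ} · x_{jₘ}^{-sₘ} ⋯ x_{j₁}^{-s₁}` in `F(p)`. -/
structure NFData (p : ℕ) where
  n : ℕ
  m : ℕ
  i : Fin n → ℕ
  r : Fin n → ℕ
  j : Fin m → ℕ
  s : Fin m → ℕ

namespace NFData

variable {p : ℕ}

/-- The element of `F(p)` represented by the normal form data, namely
`x_{i₁}^{r₁} ⋯ x_{iₙ}^{rₙ} · (x_{j₁}^{s₁} ⋯ x_{jₘ}^{sₘ})⁻¹`. -/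
def elem (d : NFData p) : FP p :=
  (List.ofFn fun k => xg p (d.i k) ^ d.r k).prod *
    ((List.ofFn fun l => xg p (d.j l) ^ d.s l).prod)⁻¹

/-- The generator with index `a` occurs in `d` (with positive or negative exponent). -/
def Occurs (d : NFData p) (a : ℕ) : Prop :=
  (∃ k, d.i k = a) ∨ (∃ l, d.j l = a)

/-- `d` is a normal form of `x ∈ F(p)`: the indices are strictly increasing, the exponents
are at least `1`, `iₙ ≠ jₘ` when both parts are nonempty, whenever a generator and its
inverse both occur one of the following `p-1` generators (or its inverse) occurs as well,
and the corresponding product equals `x`. -/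
def IsNormalFormOf (d : NFData p) (x : FP p) : Prop :=
  StrictMono d.i ∧ StrictMono d.j ∧
    (∀ k, 1 ≤ d.r k) ∧ (∀ l, 1 ≤ d.s l) ∧
    (∀ (hn : 0 < d.n) (hm : 0 < d.m),
      d.i ⟨d.n - 1, Nat.sub_lt hn Nat.one_pos⟩ ≠ d.j ⟨d.m - 1, Nat.sub_lt hm Nat.one_pos⟩) ∧
    (∀ a : ℕ, (∃ k, d.i k = a) → (∃ l, d.j l = a) →
      ∃ b : ℕ, a < b ∧ b ≤ a + p - 1 ∧ d.Occurs b) ∧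
    x = d.elem

/-- The quantity `D(x) = r₁ + ⋯ + rₙ + s₁ + ⋯ + sₘ + iₙ + jₘ` (the terms `iₙ`, `jₘ` being
omitted when `n = 0`, resp. `m = 0`). -/
def D (d : NFData p) : ℕ :=
  (∑ k, d.r k) + (∑ l, d.s l) +
    (if hn : 0 < d.n then d.i ⟨d.n - 1, Nat.sub_lt hn Nat.one_pos⟩ else 0) +
    (if hm : 0 < d.m then d.j ⟨d.m - 1, Nat.sub_lt hm Nat.one_pos⟩ else 0)

end NFData

/-- The tail sum `r_k + r_{k+1} + ⋯ + r_n`. -/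
def tailSum {n : ℕ} (r : Fin n → ℕ) (k : Fin n) : ℕ :=
  ∑ l ∈ Finset.univ.filter (fun l => k ≤ l), r l
/-- `N(x)` associated to a normal form in `F(2)` (Theorem 3):
the maximum of `i_k + r_k + ⋯ + r_n + 1` and `j_l + s_l + ⋯ + s_m + 1`. -/
def NFData.N2 (d : NFData 2) : ℕ :=
  max (Finset.univ.sup fun k => d.i k + tailSum d.r k + 1)
      (Finset.univ.sup fun l => d.j l + tailSum d.s l + 1)

/-- `N(x)` associated to a normal form in `F(p)` (Theorem 6):
the maximum of `⌊i_k/(p-1)⌋ + r_k + ⋯ + r_n + 1` and `⌊j_l/(p-1)⌋ + s_l + ⋯ + s_m + 1`. -/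
def NFData.Ngen {p : ℕ} (d : NFData p) : ℕ :=
  max (Finset.univ.sup fun k => d.i k / (p - 1) + tailSum d.r k + 1)
      (Finset.univ.sup fun l => d.j l / (p - 1) + tailSum d.s l + 1)

/-- `N(x) = max { i_k + r_k + ⋯ + r_n + 1 }` for a positive word (Proposition 2). -/
def posN {n : ℕ} (i r : Fin n → ℕ) : ℕ :=
  Finset.univ.sup fun k => i k + tailSum r k + 1

/-- `N₁(x) = max { ⌊i_k/(p-1)⌋ + r_k + ⋯ + r_n + 1 }` (Proposition 4). -/
def posN1 (p : ℕ) {n : ℕ} (i r : Fin n → ℕ) : ℕ :=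
  Finset.univ.sup fun k => i k / (p - 1) + tailSum r k + 1

/-- `N₂(x) = max { i_k + (p-1)(r_k + ⋯ + r_n) + 1 }` (Proposition 5). -/
def posN2 (p : ℕ) {n : ℕ} (i r : Fin n → ℕ) : ℕ :=
  Finset.univ.sup fun k => i k + (p - 1) * tailSum r k + 1

/-- `x ∈ ℤ[1/p]`. -/
def IsPAdicRational (p : ℕ) (x : ℝ) : Prop :=
  ∃ (a : ℤ) (n : ℕ), x = (a : ℝ) / (p : ℝ) ^ n

/-- Thompson's group `F(p)` realized as a set of permutations of `ℝ`: orientation-preserving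
piecewise-linear homeomorphisms of `[0,1]` (extended by the identity outside `[0,1]`) with
finitely many breakpoints, all in `ℤ[1/p]`, whose slopes are integer powers of `p`. -/
def PLSet (p : ℕ) : Set (Equiv.Perm ℝ) :=
  { f | Monotone f ∧ (∀ t : ℝ, t ≤ 0 → f t = t) ∧ (∀ t : ℝ, 1 ≤ t → f t = t) ∧
    ∃ B : Finset ℝ, (∀ b ∈ B, IsPAdicRational p b) ∧
      ∀ t : ℝ, t ∉ (B : Set ℝ) →
        ∃ ε > (0 : ℝ), ∃ (k : ℤ) (c : ℝ), ∀ s : ℝ, |s - t| < ε → f s = (p : ℝ) ^ k * s + c }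

/-- The map `Φ_p` on homeomorphisms: `(Φ_p f)(t) = t` for `t ≤ 1 - 1/p`, and
`(Φ_p f)(t) = ((p-1) + f(pt - (p-1)))/p` for `t ≥ 1 - 1/p`. -/
noncomputable def PhiMap (p : ℕ) (f : ℝ → ℝ) : ℝ → ℝ := fun t =>
  if t ≤ 1 - 1 / (p : ℝ) then t
  else (((p : ℝ) - 1) + f ((p : ℝ) * t - ((p : ℝ) - 1))) / (p : ℝ)

/-- The piecewise-linear homeomorphism `f_i` of `ℝ` corresponding to the generator `x_i`
of `F(p)`. -/
noncomputable def fgen (p : ℕ) (i : ℕ) : ℝ → ℝ := fun t =>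
  if t ≤ (i : ℝ) then t
  else if t ≤ (i : ℝ) + 1 then (p : ℝ) * t + (i : ℝ) * (1 - (p : ℝ))
  else t + (p : ℝ) - 1

/-! `F(p)` acts on the ends of the forest of infinite `p`-ary trees with roots `0, 1, 2, …`: the
generator `x_c` hangs the trees with roots `c, …, c + p - 1` below a new root `c` and renumbers
the later roots. Count the nodes whose cone is not carried onto the cone of a single node by a
given element, and add the same count for its inverse. This number is subadditive and equals `1`
for each generator, so it bounds the length of every word from below.

A positive word of length `n` creates exactly `n` new nodes. Cancellation between the nodes
created by the two halves `P`, `Q` of a product `P * Q⁻¹` would have to start at a deepest one;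
there all the children come from roots, so that for some `n` the caret on the roots
`n, …, n + p - 1` is the last one built by both halves. For ordered words this says that `n`
occurs in both and none of `n + 1, …, n + p - 1` occurs in either, which is what a normal form
excludes. Hence the count of a normal form is at least the sum of its exponents. -/

open Set

theorem encard_compl_range_comp {α β γ : Type*} (f : α → β) {g : β → γ}
    (hg : Function.Injective g) :
    (range (g ∘ f))ᶜ.encard = (range g)ᶜ.encard + (range f)ᶜ.encard := by
  have hdisj : Disjoint (range g)ᶜ (g '' (range f)ᶜ) :=
    disjoint_compl_left_iff_subset.2 (image_subset_range g _)
  have hunion : (range (g ∘ f))ᶜ = (range g)ᶜ ∪ g '' (range f)ᶜ := by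
    rw [range_comp, image_compl_eq_range_sdiff_image hg]
    have hsub := image_subset_range g (range f)
    tauto_set
  rw [hunion, encard_union_eq hdisj, hg.encard_image]

theorem length_le_of_append_stream_eq {α : Type*} [Nontrivial α] {u v : List α}
    (h : ∀ s : Stream' α, u ++ₛ s = v ++ₛ s) : v.length ≤ u.length := by
  by_contra! hlt
  obtain ⟨a, ha⟩ := exists_ne v[u.length]
  have hget := congrArg (Stream'.get · u.length) (h (Stream'.const a))
  simp only [Stream'.get_append_length, Stream'.get_append_left _ _ _ hlt] at hget
  exact ha hget

theorem eq_of_append_stream_eq {α : Type*} [Nontrivial α] {u v : List α}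
    (h : ∀ s : Stream' α, u ++ₛ s = v ++ₛ s) : u = v := by
  obtain ⟨a, -⟩ := exists_pair_ne α
  exact Stream'.append_left_injective _ _ _ _ (h (Stream'.const a))
    ((length_le_of_append_stream_eq fun s => (h s).symm).antisymm
      (length_le_of_append_stream_eq h))

/-- The nodes of the forest of regular trees branching over `α` with roots indexed by `R`: a root
together with the finite path that leads from it to the node. -/
abbrev ForestNode (R α : Type*) := R × List α

/-- The ends of the forest of regular trees branching over `α` with roots indexed by `R`: a root
together with an infinite path starting there. -/
abbrev ForestEnd (R α : Type*) := R × Stream' α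

section Cones

variable {R α : Type*}

namespace ForestNode

/-- The root `r`, regarded as a node. -/
def root (r : R) : ForestNode R α := (r, [])

/-- The `k`-th child of a node. -/
def child (I : ForestNode R α) (k : α) : ForestNode R α := (I.1, I.2 ++ [k])

/-- The end reached by following the infinite path `s` from the node `I`. As `s` varies these
ends form the cone of `I`, parametrized by `s`. -/
def below (I : ForestNode R α) (s : Stream' α) : ForestEnd R α := (I.1, I.2 ++ₛ s)

theorem root_injective : Function.Injective (root : R → ForestNode R α) :=
  fun _ _ h => congrArg Prod.fst h

theorem root_ne_child (r : R) (I : ForestNode R α) (k : α) : root r ≠ I.child k := by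
  simp [root, child]

theorem child_eq_child_iff {I J : ForestNode R α} {k l : α} :
    I.child k = J.child l ↔ I = J ∧ k = l := by
  simp [child, Prod.ext_iff, and_assoc]

theorem eq_root_or_eq_child (I : ForestNode R α) :
    (∃ r, I = root r) ∨ ∃ J k, I = child J k := by
  obtain ⟨r, u⟩ := I
  rcases List.eq_nil_or_concat u with rfl | ⟨v, k, rfl⟩
  · exact .inl ⟨r, rfl⟩
  · exact .inr ⟨(r, v), k, by simp [child]⟩

theorem below_child (I : ForestNode R α) (k : α) (s : Stream' α) :
    (I.child k).below s = I.below (Stream'.cons k s) := by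
  simp [below, child, Stream'.append_append_stream]

theorem eq_of_below_eq [Nontrivial α] {I J : ForestNode R α}
    (h : ∀ s, I.below s = J.below s) : I = J := by
  obtain ⟨a, -⟩ := exists_pair_ne α
  exact Prod.ext (Prod.mk.inj (h (Stream'.const a))).1
    (eq_of_append_stream_eq fun s => (Prod.mk.inj (h s)).2)

end ForestNode

/-- `f` carries the cone of the node `I` onto the cone of the node `J` by replacing the prefix
`I` with `J`. -/
def MapsCone (f : Equiv.Perm (ForestEnd R α)) (I J : ForestNode R α) : Prop :=
  ∀ s, f (I.below s) = J.below s

namespace MapsCone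

variable {f g : Equiv.Perm (ForestEnd R α)} {I J K : ForestNode R α}

theorem inv (h : MapsCone f I J) : MapsCone f⁻¹ J I :=
  fun s => Equiv.Perm.inv_eq_iff_eq.2 (h s).symm

theorem mul (hf : MapsCone f J K) (hg : MapsCone g I J) : MapsCone (f * g) I K :=
  fun s => by rw [Equiv.Perm.mul_apply, hg s, hf s]

theorem child (h : MapsCone f I J) (k : α) : MapsCone f (I.child k) (J.child k) :=
  fun s => by rw [ForestNode.below_child, ForestNode.below_child, h]

variable [Nontrivial α]

theorem right_unique (h : MapsCone f I J) (h' : MapsCone f I K) : J = K :=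
  ForestNode.eq_of_below_eq fun s => (h s).symm.trans (h' s)

theorem left_unique (h : MapsCone f I K) (h' : MapsCone f J K) : I = J :=
  h.inv.right_unique h'.inv

end MapsCone

/-- The nodes whose cone is not carried onto the cone of a single node by `f`, that is, the
interior nodes of the smallest forest on whose leaves `f` acts by prefix replacement. -/
def splitNodes (f : Equiv.Perm (ForestEnd R α)) : Set (ForestNode R α) :=
  {I | ∀ J, ¬ MapsCone f I J}

theorem mem_splitNodes {f : Equiv.Perm (ForestEnd R α)} {I : ForestNode R α} :
    I ∈ splitNodes f ↔ ∀ J, ¬ MapsCone f I J := Iff.rfl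

theorem notMem_splitNodes {f : Equiv.Perm (ForestEnd R α)} {I : ForestNode R α} :
    I ∉ splitNodes f ↔ ∃ J, MapsCone f I J := by
  simp [mem_splitNodes]

theorem splitNodes_mul_subset (f g : Equiv.Perm (ForestEnd R α)) :
    splitNodes (f * g) ⊆ {I | ∃ J ∈ splitNodes f, MapsCone g I J} ∪ splitNodes g := by
  intro I hI
  by_cases hg : I ∈ splitNodes g
  · exact .inr hg
  · obtain ⟨J, hJ⟩ := notMem_splitNodes.1 hg
    exact .inl ⟨J, fun K hK => hI K (hK.mul hJ), hJ⟩

theorem encard_mapsCone_preimage_le [Nontrivial α] (g : Equiv.Perm (ForestEnd R α))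
    (S : Set (ForestNode R α)) : {I | ∃ J ∈ S, MapsCone g I J}.encard ≤ S.encard := by
  have hpre : ∀ J, ∃ I', ∀ I, MapsCone g I J → I' = I := by
    intro J
    by_cases h : ∃ I, MapsCone g I J
    · exact h.imp fun I' hI' I hI => hI'.left_unique hI
    · exact ⟨J, fun I hI => (h ⟨I, hI⟩).elim⟩
  choose pre hpre using hpre
  refine (encard_le_encard ?_).trans (encard_image_le pre S)
  rintro I ⟨J, hJ, hIJ⟩
  exact ⟨J, hJ, hpre J I hIJ⟩

theorem encard_splitNodes_mul_le [Nontrivial α] (f g : Equiv.Perm (ForestEnd R α)) :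
    (splitNodes (f * g)).encard ≤ (splitNodes f).encard + (splitNodes g).encard :=
  calc (splitNodes (f * g)).encard
      ≤ ({I | ∃ J ∈ splitNodes f, MapsCone g I J} ∪ splitNodes g).encard :=
        encard_le_encard (splitNodes_mul_subset f g)
    _ ≤ {I | ∃ J ∈ splitNodes f, MapsCone g I J}.encard + (splitNodes g).encard :=
        encard_union_le _ _
    _ ≤ (splitNodes f).encard + (splitNodes g).encard :=
        add_le_add (encard_mapsCone_preimage_le g _) le_rfl

/-- The number of carets in the smallest forest diagram of `f`, counted in its domain and its
range. -/
noncomputable def caretCount (f : Equiv.Perm (ForestEnd R α)) : ℕ∞ :=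
  (splitNodes f).encard + (splitNodes f⁻¹).encard

theorem caretCount_inv (f : Equiv.Perm (ForestEnd R α)) : caretCount f⁻¹ = caretCount f := by
  rw [caretCount, caretCount, inv_inv, add_comm]

theorem caretCount_mul_le [Nontrivial α] (f g : Equiv.Perm (ForestEnd R α)) :
    caretCount (f * g) ≤ caretCount f + caretCount g := by
  unfold caretCount
  rw [mul_inv_rev, add_add_add_comm, add_comm (splitNodes f⁻¹).encard]
  exact add_le_add (encard_splitNodes_mul_le f g) (encard_splitNodes_mul_le g⁻¹ f⁻¹)

/-- `f` carries the cone of every node `I` onto the cone of the node `σ I`. Positive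
elements of `F(p)` act in this way, their inverses in general do not. -/
def ActsOnNodes (f : Equiv.Perm (ForestEnd R α)) (σ : ForestNode R α → ForestNode R α) : Prop :=
  ∀ I, MapsCone f I (σ I)

namespace ActsOnNodes

variable {f g : Equiv.Perm (ForestEnd R α)} {σ τ : ForestNode R α → ForestNode R α}

theorem one : ActsOnNodes (1 : Equiv.Perm (ForestEnd R α)) id := fun _ _ => rfl

theorem mul (hf : ActsOnNodes f σ) (hg : ActsOnNodes g τ) : ActsOnNodes (f * g) (σ ∘ τ) :=
  fun I => (hf (τ I)).mul (hg I)

theorem splitNodes_eq_empty (hf : ActsOnNodes f σ) : splitNodes f = ∅ :=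
  eq_empty_of_forall_notMem fun I => notMem_splitNodes.2 ⟨σ I, hf I⟩

variable [Nontrivial α]

theorem injective (hf : ActsOnNodes f σ) : Function.Injective σ :=
  fun I J h => (hf I).left_unique (h ▸ hf J)

theorem map_child (hf : ActsOnNodes f σ) (I : ForestNode R α) (k : α) :
    σ (I.child k) = (σ I).child k :=
  (hf _).right_unique ((hf I).child k)

theorem mapsCone_inv_iff (hf : ActsOnNodes f σ) {I J : ForestNode R α} :
    MapsCone f⁻¹ I J ↔ σ J = I := by
  refine ⟨fun h => (hf J).right_unique ?_, fun h => h ▸ (hf J).inv⟩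
  simpa only [inv_inv] using h.inv

theorem splitNodes_inv (hf : ActsOnNodes f σ) : splitNodes f⁻¹ = (range σ)ᶜ := by
  ext I
  simp [mem_splitNodes, hf.mapsCone_inv_iff]

theorem caretCount_eq (hf : ActsOnNodes f σ) : caretCount f = (range σ)ᶜ.encard := by
  rw [caretCount, hf.splitNodes_eq_empty, hf.splitNodes_inv, encard_empty, zero_add]

theorem exists_root_of_child_mem_range (hf : ActsOnNodes f σ) {I : ForestNode R α} {k : α}
    (hI : I ∉ range σ) (hk : I.child k ∈ range σ) : ∃ r, σ (ForestNode.root r) = I.child k := by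
  obtain ⟨K, hK⟩ := hk
  rcases K.eq_root_or_eq_child with ⟨r, rfl⟩ | ⟨K, l, rfl⟩
  · exact ⟨r, hK⟩
  · rw [hf.map_child, ForestNode.child_eq_child_iff] at hK
    exact (hI ⟨K, hK.1⟩).elim

end ActsOnNodes

theorem caretCount_one [Nontrivial α] : caretCount (1 : Equiv.Perm (ForestEnd R α)) = 0 := by
  simp [(ActsOnNodes.one (R := R) (α := α)).caretCount_eq]

theorem caretCount_list_prod_le [Nontrivial α] (l : List (Equiv.Perm (ForestEnd R α)))
    (hl : ∀ f ∈ l, caretCount f ≤ 1) : caretCount l.prod ≤ l.length := by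
  induction l with
  | nil => simp [caretCount_one]
  | cons f l ih =>
    rw [List.forall_mem_cons] at hl
    calc caretCount (f :: l).prod
        ≤ caretCount f + caretCount l.prod := by
          rw [List.prod_cons]
          exact caretCount_mul_le f l.prod
      _ ≤ 1 + l.length := add_le_add hl.1 (ih hl.2)
      _ = (f :: l).length := by rw [List.length_cons, Nat.cast_succ, add_comm]

/-- Some family of roots is sent by `σ` to the children of a node, and by `τ` to the children of
a node: when `σ` is composed with `τ⁻¹` the two carets cancel. -/
def HaveCommonCaret (σ τ : ForestNode R α → ForestNode R α) : Prop :=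
  ∃ (m : α → R) (I J : ForestNode R α),
    (∀ k, σ (.root (m k)) = I.child k) ∧ ∀ k, τ (.root (m k)) = J.child k

theorem HaveCommonCaret.symm {σ τ : ForestNode R α → ForestNode R α}
    (h : HaveCommonCaret σ τ) : HaveCommonCaret τ σ := by
  obtain ⟨m, I, J, hI, hJ⟩ := h
  exact ⟨m, J, I, hJ, hI⟩

namespace ActsOnNodes

variable {f g : Equiv.Perm (ForestEnd R α)} {σ τ : ForestNode R α → ForestNode R α}
  [Nontrivial α]

theorem splitNodes_inv_subset (hf : ActsOnNodes f σ) (hg : ActsOnNodes g τ)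
    (hfin : (range τ)ᶜ.Finite) (hcaret : ¬ HaveCommonCaret σ τ) :
    splitNodes g⁻¹ ⊆ splitNodes (f * g⁻¹) := by
  by_contra hsub
  obtain ⟨I₀, hI₀⟩ := sdiff_nonempty.2 hsub
  have hfin' : (splitNodes g⁻¹ \ splitNodes (f * g⁻¹)).Finite :=
    (hg.splitNodes_inv ▸ hfin).subset sdiff_subset
  obtain ⟨I, ⟨hIg, hIfg⟩, hdeepest⟩ :=
    exists_max_image _ (fun I : ForestNode R α => I.2.length) hfin' ⟨I₀, hI₀⟩
  obtain ⟨J, hJ⟩ := notMem_splitNodes.1 hIfg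
  have hroot : ∀ k, ∃ r, τ (.root r) = I.child k := by
    intro k
    rw [hg.splitNodes_inv, mem_compl_iff] at hIg
    refine hg.exists_root_of_child_mem_range hIg (by_contra fun hk => ?_)
    have hle := hdeepest (I.child k)
      ⟨hg.splitNodes_inv ▸ hk, notMem_splitNodes.2 ⟨_, hJ.child k⟩⟩
    simp [ForestNode.child] at hle
  choose m hm using hroot
  refine hcaret ⟨m, J, I, fun k => (hf _).right_unique ?_, hm⟩
  have hroots := (hJ.child k).mul (hm k ▸ hg (.root (m k)))
  rwa [inv_mul_cancel_right] at hroots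

theorem encard_add_encard_le_caretCount (hf : ActsOnNodes f σ) (hg : ActsOnNodes g τ)
    (hσ : (range σ)ᶜ.Finite) (hτ : (range τ)ᶜ.Finite) (hcaret : ¬ HaveCommonCaret σ τ) :
    (range σ)ᶜ.encard + (range τ)ᶜ.encard ≤ caretCount (f * g⁻¹) := by
  rw [caretCount, mul_inv_rev, inv_inv, add_comm, ← hf.splitNodes_inv, ← hg.splitNodes_inv]
  exact add_le_add (encard_le_encard (hf.splitNodes_inv_subset hg hτ hcaret))
    (encard_le_encard (hg.splitNodes_inv_subset hf hσ fun h => hcaret h.symm))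

end ActsOnNodes

end Cones

section Grafting

variable {p : ℕ}

/-- The effect of `x_c` on nodes: the trees with roots `c, …, c + p - 1` become the subtrees of
a new root `c`, and the later roots move down by `p - 1`. -/
def graft (c : ℕ) (I : ForestNode ℕ (Fin p)) : ForestNode ℕ (Fin p) :=
  if I.1 < c then I
  else if h : I.1 - c < p then (c, ⟨I.1 - c, h⟩ :: I.2)
  else (I.1 - (p - 1), I.2)

/-- The effect of `x_c` on ends; see `graft`. -/
def graftEnd (c : ℕ) (e : ForestEnd ℕ (Fin p)) : ForestEnd ℕ (Fin p) :=
  if e.1 < c then e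
  else if h : e.1 - c < p then (c, Stream'.cons ⟨e.1 - c, h⟩ e.2)
  else (e.1 - (p - 1), e.2)

/-- The effect of `x_c⁻¹` on ends: the root `c` is removed, its subtrees get the roots
`c, …, c + p - 1`, and the later roots move up by `p - 1`. -/
def ungraftEnd (c : ℕ) (e : ForestEnd ℕ (Fin p)) : ForestEnd ℕ (Fin p) :=
  if e.1 < c then e
  else if e.1 = c then (c + e.2.head, e.2.tail)
  else (e.1 + (p - 1), e.2)

theorem ungraftEnd_graftEnd (c : ℕ) (e : ForestEnd ℕ (Fin p)) :
    ungraftEnd c (graftEnd c e) = e := by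
  have hp := e.2.head.pos
  obtain ⟨r, s⟩ := e
  unfold ungraftEnd graftEnd
  grind [Stream'.head_cons, Stream'.tail_cons]

theorem graftEnd_ungraftEnd (c : ℕ) (e : ForestEnd ℕ (Fin p)) :
    graftEnd c (ungraftEnd c e) = e := by
  have hhead := e.2.head.isLt
  obtain ⟨r, s⟩ := e
  unfold ungraftEnd graftEnd
  grind [Stream'.eta]

/-- The permutation of the ends of the forest by which `x_c` acts. -/
def graftPerm (p c : ℕ) : Equiv.Perm (ForestEnd ℕ (Fin p)) where
  toFun := graftEnd c
  invFun := ungraftEnd c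
  left_inv := ungraftEnd_graftEnd c
  right_inv := graftEnd_ungraftEnd c

theorem graftPerm_mul_graftPerm {i j : ℕ} (hij : i < j) :
    graftPerm p j * graftPerm p i = graftPerm p i * graftPerm p (j + p - 1) := by
  ext1 e
  have hp := e.2.head.pos
  obtain ⟨r, s⟩ := e
  change graftEnd j (graftEnd i _) = graftEnd i (graftEnd (j + p - 1) _)
  unfold graftEnd
  grind

theorem actsOnNodes_graftPerm (c : ℕ) : ActsOnNodes (graftPerm p c) (graft c) := by
  intro I s
  change graftEnd c (I.below s) = _
  unfold graftEnd graft ForestNode.below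
  grind [Stream'.cons_append_stream]

theorem graft_of_lt {c : ℕ} {I : ForestNode ℕ (Fin p)} (h : I.1 < c) : graft c I = I :=
  if_pos h

theorem graft_root_add (c : ℕ) (k : Fin p) :
    graft c (.root (c + k)) = (ForestNode.root c).child k := by
  simp [graft, ForestNode.root, ForestNode.child]

theorem graft_ne_root [NeZero p] (c : ℕ) (I : ForestNode ℕ (Fin p)) : graft c I ≠ .root c := by
  have hp := NeZero.pos p
  unfold graft ForestNode.root
  grind

theorem range_graft [NeZero p] (c : ℕ) :
    range (graft c) = {(ForestNode.root c : ForestNode ℕ (Fin p))}ᶜ := by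
  ext ⟨r, u⟩
  rw [mem_compl_singleton_iff, mem_range]
  constructor
  · rintro ⟨I, hI⟩
    exact hI ▸ graft_ne_root c I
  · intro hne
    rcases lt_trichotomy r c with hr | rfl | hr
    · exact ⟨(r, u), graft_of_lt hr⟩
    · cases u with
      | nil => exact (hne rfl).elim
      | cons k u => exact ⟨(r + k, u), by simp [graft]⟩
    · have hp := NeZero.pos p
      exact ⟨(r + (p - 1), u), by grind [graft]⟩

/-- The effect of the positive word `x_{a₁} x_{a₂} ⋯` on nodes. -/
def graftWord (L : List ℕ) (I : ForestNode ℕ (Fin p)) : ForestNode ℕ (Fin p) :=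
  L.foldr graft I

theorem graftWord_nil : (graftWord [] : ForestNode ℕ (Fin p) → _) = id := rfl

theorem graftWord_cons (c : ℕ) (L : List ℕ) :
    (graftWord (c :: L) : ForestNode ℕ (Fin p) → _) = graft c ∘ graftWord L := rfl

theorem actsOnNodes_graftWord (L : List ℕ) :
    ActsOnNodes (L.map (graftPerm p)).prod (graftWord L) := by
  induction L with
  | nil => exact .one
  | cons c L ih =>
    rw [List.map_cons, List.prod_cons]
    exact (actsOnNodes_graftPerm c).mul ih

theorem graftWord_of_forall_lt {L : List ℕ} {I : ForestNode ℕ (Fin p)} (h : ∀ a ∈ L, I.1 < a) :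
    graftWord L I = I := by
  induction L with
  | nil => rfl
  | cons c L ih =>
    rw [List.forall_mem_cons] at h
    rw [graftWord_cons, Function.comp_apply, ih h.2, graft_of_lt h.1]

variable [Nontrivial (Fin p)]

theorem neZero_of_nontrivial_fin : NeZero p := .of_pos Fin.pos'

attribute [local instance] neZero_of_nontrivial_fin

theorem graft_injective (c : ℕ) : Function.Injective (graft (p := p) c) :=
  (actsOnNodes_graftPerm c).injective

theorem graftWord_injective (L : List ℕ) : Function.Injective (graftWord (p := p) L) :=
  (actsOnNodes_graftWord L).injective

theorem encard_compl_range_graft (c : ℕ) : (range (graft (p := p) c))ᶜ.encard = 1 := by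
  rw [range_graft, compl_compl, encard_singleton]

theorem encard_compl_range_graftWord (L : List ℕ) :
    (range (graftWord (p := p) L))ᶜ.encard = L.length := by
  induction L with
  | nil => simp [graftWord_nil]
  | cons c L ih =>
    rw [graftWord_cons, encard_compl_range_comp _ (graft_injective c),
      encard_compl_range_graft, ih, List.length_cons, Nat.cast_succ, add_comm]

theorem caretCount_graftPerm (c : ℕ) : caretCount (graftPerm p c) = 1 := by
  rw [(actsOnNodes_graftPerm c).caretCount_eq, encard_compl_range_graft]

theorem add_le_of_root_mem_range_graftWord {L : List ℕ} (hL : L.SortedLE) {c : ℕ}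
    (hc : ∀ a ∈ L, c ≤ a)
    (h : ∀ k : Fin p, ForestNode.root (c + k) ∈ range (graftWord (p := p) L)) :
    ∀ a ∈ L, c + p ≤ a := by
  cases L with
  | nil => simp
  | cons e L =>
    have hce : c ≤ e := hc e List.mem_cons_self
    have he : c + p ≤ e := by
      by_contra! hlt
      have hroot : ForestNode.root e ∈ range (graft (p := p) e) := by
        simpa [Nat.add_sub_cancel' hce] using
          range_comp_subset_range _ _ (h ⟨e - c, by omega⟩)
      simp [range_graft] at hroot
    exact List.forall_mem_cons.2
      ⟨he, fun a ha => he.trans ((List.pairwise_cons.1 hL.pairwise).1 a ha)⟩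

theorem exists_index_of_graftWord_root_eq_child {L : List ℕ} (hL : L.SortedLE) {m : Fin p → ℕ}
    {I : ForestNode ℕ (Fin p)} (h : ∀ k, graftWord L (.root (m k)) = I.child k) :
    ∃ n ∈ L, (∀ k, m k = n + k) ∧ ∀ b ∈ L, n < b → n + p ≤ b := by
  induction L generalizing I with
  | nil => exact (ForestNode.root_ne_child _ _ _ (h 0)).elim
  | cons c L ih =>
    obtain ⟨hcL, hL'⟩ := List.pairwise_cons.1 hL.pairwise
    by_cases hI : I = .root c
    · have hroot : ∀ k, graftWord L (.root (m k)) = ForestNode.root (c + k) := fun k =>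
        graft_injective c ((h k).trans (hI ▸ (graft_root_add c k).symm))
      have hfar := add_le_of_root_mem_range_graftWord hL'.sortedLE hcL fun k => ⟨_, hroot k⟩
      refine ⟨c, List.mem_cons_self, fun k => ?_, ?_⟩
      · have hfix : graftWord (p := p) L (.root (c + k)) = .root (c + k) :=
          graftWord_of_forall_lt fun a ha => (Nat.add_lt_add_left k.isLt c).trans_le (hfar a ha)
        exact ForestNode.root_injective (graftWord_injective L ((hroot k).trans hfix.symm))
      · exact List.forall_mem_cons.2 ⟨fun hlt => (lt_irrefl c hlt).elim, fun b hb _ => hfar b hb⟩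
    · obtain ⟨I', rfl⟩ : I ∈ range (graft c) := by rwa [range_graft]
      have hchild : ∀ k, graftWord L (.root (m k)) = I'.child k := fun k =>
        graft_injective c ((h k).trans ((actsOnNodes_graftPerm c).map_child I' k).symm)
      obtain ⟨n, hn, hm, hgap⟩ := ih hL'.sortedLE hchild
      exact ⟨n, List.mem_cons_of_mem c hn, hm, List.forall_mem_cons.2
        ⟨fun hlt => (hlt.not_ge (hcL n hn)).elim, hgap⟩⟩

/-- The condition on the lists of indices of `P` and `Q` under which the product `P * Q⁻¹` of
positive words is reduced: an index that is common to both is followed by one of the next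
`p - 1` indices. -/
def IsReducedPair (p : ℕ) (P Q : List ℕ) : Prop :=
  ∀ a ∈ P, a ∈ Q → ∃ b, a < b ∧ b < a + p ∧ (b ∈ P ∨ b ∈ Q)

theorem IsReducedPair.not_haveCommonCaret {P Q : List ℕ} (h : IsReducedPair p P Q)
    (hP : P.SortedLE) (hQ : Q.SortedLE) :
    ¬ HaveCommonCaret (graftWord (p := p) P) (graftWord Q) := by
  rintro ⟨m, I, J, hI, hJ⟩
  obtain ⟨n, hnP, hmP, hgapP⟩ := exists_index_of_graftWord_root_eq_child hP hI
  obtain ⟨n', hnQ, hmQ, hgapQ⟩ := exists_index_of_graftWord_root_eq_child hQ hJ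
  obtain rfl : n = n' := Nat.add_right_cancel ((hmP 0).symm.trans (hmQ 0))
  obtain ⟨b, hnb, hbp, hb | hb⟩ := h n hnP hnQ
  · exact hbp.not_ge (hgapP b hb hnb)
  · exact hbp.not_ge (hgapQ b hb hnb)

end Grafting

namespace FP

variable {p : ℕ}

theorem xg_conj (p : ℕ) {i j : ℕ} (hij : i < j) :
    (xg p i)⁻¹ * xg p j * xg p i = xg p (j + p - 1) :=
  mul_inv_eq_one.1 (PresentedGroup.one_of_mem (rels := thompsonRels p) ⟨i, j, hij, rfl⟩)

theorem closure_range_xg (p : ℕ) : Subgroup.closure (range (xg p)) = ⊤ :=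
  PresentedGroup.closure_range_of (thompsonRels p)

theorem xg_mem_closure (hp : 2 ≤ p) (i : ℕ) :
    xg p i ∈ Subgroup.closure {g : FP p | ∃ i, i < p ∧ g = xg p i} := by
  induction i using Nat.strong_induction_on with
  | _ i ih =>
    by_cases hi : i < p
    · exact Subgroup.subset_closure ⟨i, hi, rfl⟩
    · have hconj : (xg p 0)⁻¹ * xg p (i - (p - 1)) * xg p 0 = xg p i := by
        rw [xg_conj p (by omega)]
        congr 1
        omega
      have h₀ := ih 0 (by omega)
      exact hconj ▸ mul_mem (mul_mem (inv_mem h₀) (ih (i - (p - 1)) (by omega))) h₀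

theorem closure_xg_lt (hp : 2 ≤ p) :
    Subgroup.closure {g : FP p | ∃ i, i < p ∧ g = xg p i} = ⊤ := by
  rw [eq_top_iff, ← closure_range_xg, Subgroup.closure_le]
  rintro _ ⟨i, rfl⟩
  exact xg_mem_closure hp i

/-- The action of `F(p)` on the ends of the forest, in which `x_c` acts by grafting at `c`. -/
def forestAction (p : ℕ) : FP p →* Equiv.Perm (ForestEnd ℕ (Fin p)) :=
  PresentedGroup.toGroup (rels := thompsonRels p) (f := graftPerm p) <| by
    rintro _ ⟨i, j, hij, rfl⟩
    simp only [map_mul, map_inv, FreeGroup.lift_apply_of]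
    rw [mul_inv_eq_one, mul_assoc, graftPerm_mul_graftPerm hij, inv_mul_cancel_left]

theorem forestAction_xg (i : ℕ) : forestAction p (xg p i) = graftPerm p i :=
  PresentedGroup.toGroup.of _

/-- The positive word in the generators `x_i` with the given list of indices. -/
def positiveWord (p : ℕ) (L : List ℕ) : FP p := (L.map (xg p)).prod

theorem actsOnNodes_positiveWord (L : List ℕ) :
    ActsOnNodes (forestAction p (positiveWord p L)) (graftWord L) := by
  have hmap : forestAction p (positiveWord p L) = (L.map (graftPerm p)).prod := by
    simp [positiveWord, map_list_prod, Function.comp_def, forestAction_xg]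
  exact hmap ▸ actsOnNodes_graftWord L

variable [Nontrivial (Fin p)]

theorem caretCount_forestAction_list_prod_le (w : List (FP p))
    (hw : ∀ g ∈ w, ∃ i : ℕ, g = xg p i ∨ g = (xg p i)⁻¹) :
    caretCount (forestAction p w.prod) ≤ w.length := by
  rw [map_list_prod, ← List.length_map (forestAction p)]
  refine caretCount_list_prod_le _ (List.forall_mem_map.2 fun g hg => ?_)
  obtain ⟨i, rfl | rfl⟩ := hw g hg
  · rw [forestAction_xg, caretCount_graftPerm]
  · rw [map_inv, caretCount_inv, forestAction_xg, caretCount_graftPerm]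

theorem length_add_length_le_caretCount {P Q : List ℕ} (hP : P.SortedLE) (hQ : Q.SortedLE)
    (h : IsReducedPair p P Q) : ((P.length + Q.length : ℕ) : ℕ∞) ≤
      caretCount (forestAction p (positiveWord p P * (positiveWord p Q)⁻¹)) := by
  have hfin : ∀ L : List ℕ, (range (graftWord (p := p) L))ᶜ.Finite := fun L =>
    finite_of_encard_eq_coe (encard_compl_range_graftWord L)
  have hle := (actsOnNodes_positiveWord P).encard_add_encard_le_caretCount
    (actsOnNodes_positiveWord Q) (hfin P) (hfin Q) (h.not_haveCommonCaret hP hQ)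
  rwa [encard_compl_range_graftWord, encard_compl_range_graftWord, ← Nat.cast_add, ← map_inv,
    ← map_mul] at hle

theorem length_add_length_le_length {P Q : List ℕ} (hP : P.SortedLE) (hQ : Q.SortedLE)
    (h : IsReducedPair p P Q) {w : List (FP p)}
    (hw : ∀ g ∈ w, ∃ i : ℕ, g = xg p i ∨ g = (xg p i)⁻¹)
    (hprod : w.prod = positiveWord p P * (positiveWord p Q)⁻¹) :
    P.length + Q.length ≤ w.length := by
  exact_mod_cast (length_add_length_le_caretCount hP hQ h).trans
    (hprod ▸ caretCount_forestAction_list_prod_le w hw)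

end FP

theorem exists_list_length_eq_wordLength {G : Type*} [Group G] {S : Set G} {x : G}
    (hx : x ∈ Subgroup.closure S) :
    ∃ w : List G, w.length = wordLength S x ∧ (∀ g ∈ w, g ∈ S ∨ g⁻¹ ∈ S) ∧ w.prod = x := by
  obtain ⟨w, hw, hprod⟩ := Submonoid.exists_list_of_mem_closure
    (Subgroup.closure_toSubmonoid S ▸ (Subgroup.mem_toSubmonoid _ _).2 hx)
  exact Nat.sInf_mem (s := {n | ∃ w : List G, w.length = n ∧ _}) ⟨w.length, w, rfl, hw, hprod⟩

section PowerProducts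

variable {n : ℕ} (i r : Fin n → ℕ)

/-- The list of indices of the product of powers `x_{i₁}^{r₁} ⋯ x_{iₙ}^{rₙ}`, written out as a
word in the generators. -/
def powerIndices : List ℕ := (List.ofFn fun k => List.replicate (r k) (i k)).flatten

theorem length_powerIndices : (powerIndices i r).length = ∑ k, r k := by
  simp [powerIndices, List.length_flatten, List.map_ofFn, List.sum_ofFn, Function.comp_def]

variable {r} in
theorem mem_powerIndices (hr : ∀ k, 1 ≤ r k) {a : ℕ} :
    a ∈ powerIndices i r ↔ ∃ k, i k = a := by
  have hr' : ∀ k, r k ≠ 0 := fun k => Nat.one_le_iff_ne_zero.1 (hr k)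
  simp [powerIndices, List.mem_ofFn, hr', eq_comm]

variable {i} in
theorem sortedLE_powerIndices (hi : StrictMono i) : (powerIndices i r).SortedLE := by
  refine List.Pairwise.sortedLE (List.pairwise_flatten.2 ⟨?_, List.pairwise_ofFn.2 ?_⟩)
  · simp [List.pairwise_replicate]
  · intro k l hkl a ha b hb
    rw [List.eq_of_mem_replicate ha, List.eq_of_mem_replicate hb]
    exact (hi hkl).le

theorem positiveWord_powerIndices (p : ℕ) :
    FP.positiveWord p (powerIndices i r) = (List.ofFn fun k => xg p (i k) ^ r k).prod := by
  simp [FP.positiveWord, powerIndices, List.map_flatten, List.prod_flatten, List.map_ofFn,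
    Function.comp_def]

end PowerProducts

namespace NFData

variable {p : ℕ} {x : FP p} {d : NFData p}

theorem elem_eq_positiveWord_mul_inv (d : NFData p) :
    d.elem = FP.positiveWord p (powerIndices d.i d.r) *
      (FP.positiveWord p (powerIndices d.j d.s))⁻¹ := by
  rw [positiveWord_powerIndices, positiveWord_powerIndices, elem]

theorem IsNormalFormOf.isReducedPair (hd : d.IsNormalFormOf x) :
    IsReducedPair p (powerIndices d.i d.r) (powerIndices d.j d.s) := by
  obtain ⟨-, -, hr, hs, -, hred, -⟩ := hd
  intro a ha hb
  simp only [mem_powerIndices _ hr, mem_powerIndices _ hs] at ha hb ⊢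
  obtain ⟨b, hab, hbp, hb⟩ := hred a ha hb
  exact ⟨b, hab, by omega, hb⟩

end NFData

/-- The normal form is a shortest word representing `x` in the infinite
generating set `{x_i : i ∈ ℕ}`: every word in the `x_i` and their inverses representing
`x` has length at least `r₁ + ⋯ + rₙ + s₁ + ⋯ + sₘ`; in particular
`|x|_p ≥ r₁ + ⋯ + rₙ + s₁ + ⋯ + sₘ`. -/
theorem statement16 (p : ℕ) (hp : 2 ≤ p) (x : FP p) (d : NFData p)
    (hd : d.IsNormalFormOf x) :
    (∀ w : List (FP p), (∀ g ∈ w, ∃ i : ℕ, g = xg p i ∨ g = (xg p i)⁻¹) → w.prod = x →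
      (∑ k, d.r k) + (∑ l, d.s l) ≤ w.length) ∧
      (∑ k, d.r k) + (∑ l, d.s l) ≤ wlen p x := by
  have : Nontrivial (Fin p) := Fin.nontrivial_iff_two_le.2 hp
  have shortest : ∀ w : List (FP p), (∀ g ∈ w, ∃ i : ℕ, g = xg p i ∨ g = (xg p i)⁻¹) →
      w.prod = x → (∑ k, d.r k) + (∑ l, d.s l) ≤ w.length := by
    intro w hw hprod
    have hred := hd.isReducedPair
    obtain ⟨hi, hj, -, -, -, -, rfl⟩ := hd
    rw [← length_powerIndices d.i, ← length_powerIndices d.j]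
    exact FP.length_add_length_le_length (sortedLE_powerIndices d.r hi)
      (sortedLE_powerIndices d.s hj) hred hw (hprod.trans d.elem_eq_positiveWord_mul_inv)
  refine ⟨shortest, ?_⟩
  have hx : x ∈ Subgroup.closure {g : FP p | ∃ i, i < p ∧ g = xg p i} :=
    FP.closure_xg_lt hp ▸ Subgroup.mem_top x
  obtain ⟨w, hlen, hw, hprod⟩ := exists_list_length_eq_wordLength hx
  refine (shortest w (fun g hg => ?_) hprod).trans_eq hlen
  obtain ⟨i, -, h⟩ | ⟨i, -, h⟩ := hw g hg
  · exact ⟨i, .inl h⟩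
  · exact ⟨i, .inr (inv_eq_iff_eq_inv.1 h)⟩
end

section
/- Let p ≥ 2 and let x ∈ F(p) have normal form x = x_{i₁}^{r₁}⋯x_{iₙ}^{rₙ}·x_{jₘ}^{-sₘ}⋯x_{j₁}^{-s₁}. Then the largest indices appearing in the normal form are bounded by (p−1) times the word length of x: iₙ ≤ (p−1)·|x|_p (when n ≥ 1) and jₘ ≤ (p−1)·|x|_p (when m ≥ 1). -/
open scoped BigOperators

/-!
Write `p = q + 1`. In a word of length `L` in `x_0, …, x_q` every inverse letter can be moved to
the right of every positive letter. When two letters pass each other, one of their indices grows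
by `q` and the other is unchanged, and the same happens when a positive word is sorted; so the
element is a fraction of two sorted positive words with all indices at most `q * L`.

The largest index of a normal form is at most that of any other such fraction of the same element.
Let `i` be the least index of the other fraction. In the piecewise linear action on `[0, ∞)`,
letters of index larger than `i` fix a right neighbourhood of `i` pointwise, whereas `x_i` fixes `i`
with a nontrivial right slope. Hence the right slope at `i` determines the exponent sum of `x_i`,
which is thus the same for the two fractions. Either both contain `x_i` on the same side, where it
can be cancelled, or the normal form does not contain `x_i` and the other fraction is conjugate by
`x_i` to a shorter one; undoing this conjugation raises all indices of the normal form by `q`.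
The same slopes, together with the condition on letters occurring with their inverses, show that
the normal form has no index smaller than `i`.
-/

theorem exists_length_eq_wordLength {G : Type*} [Group G] {S : Set G}
    (hS : Subgroup.closure S = ⊤) (x : G) :
    ∃ w : List G, w.length = wordLength S x ∧ (∀ g ∈ w, g ∈ S ∨ g⁻¹ ∈ S) ∧ w.prod = x := by
  have hx : x ∈ (Subgroup.closure S).toSubmonoid := by simp [hS]
  rw [Subgroup.closure_toSubmonoid] at hx
  obtain ⟨w, hw, hprod⟩ := Submonoid.exists_list_of_mem_closure hx
  have hne : {n : ℕ | ∃ w : List G,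
      w.length = n ∧ (∀ g ∈ w, g ∈ S ∨ g⁻¹ ∈ S) ∧ w.prod = x}.Nonempty :=
    ⟨w.length, w, rfl, hw, hprod⟩
  exact Nat.sInf_mem hne

theorem exists_mem_forall_mem_le {α : Type*} [LinearOrder α] {l : List α} (h : l ≠ []) :
    ∃ i ∈ l, ∀ a ∈ l, i ≤ a :=
  ⟨l.min h, List.min_mem h, fun _ ha => List.min_le_of_mem ha⟩

theorem exists_eq_cons_of_pairwise_le {α : Type*} [PartialOrder α] {i : α} {l : List α}
    (hl : l.Pairwise (· ≤ ·)) (hmin : ∀ a ∈ l, i ≤ a) (hi : i ∈ l) : ∃ l', l = i :: l' := by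
  cases l with
  | nil => simp at hi
  | cons a l =>
    have hai : a ≤ i := by
      rcases List.mem_cons.1 hi with rfl | hil
      · exact le_rfl
      · exact List.rel_of_pairwise_cons hl hil
    exact ⟨l, by rw [hai.antisymm (hmin a List.mem_cons_self)]⟩

namespace FP

variable {q : ℕ}

theorem xg_mul_xg_of_lt {i j : ℕ} (h : i < j) :
    xg (q + 1) j * xg (q + 1) i = xg (q + 1) i * xg (q + 1) (j + q) := by
  have hmem : (FreeGroup.of i)⁻¹ * FreeGroup.of j * FreeGroup.of i * (FreeGroup.of (j + q))⁻¹ ∈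
      thompsonRels (q + 1) := ⟨i, j, h, rfl⟩
  have hrel : (xg (q + 1) i)⁻¹ * xg (q + 1) j * xg (q + 1) i * (xg (q + 1) (j + q))⁻¹ = 1 :=
    PresentedGroup.one_of_mem hmem
  rwa [mul_inv_eq_one, mul_assoc, inv_mul_eq_iff_eq_mul] at hrel

theorem inv_xg_mul_xg_of_lt {i j : ℕ} (h : i < j) :
    (xg (q + 1) i)⁻¹ * xg (q + 1) j = xg (q + 1) (j + q) * (xg (q + 1) i)⁻¹ := by
  rw [eq_mul_inv_iff_mul_eq, mul_assoc, xg_mul_xg_of_lt h, inv_mul_cancel_left]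

theorem inv_xg_mul_xg_of_gt {i j : ℕ} (h : j < i) :
    (xg (q + 1) i)⁻¹ * xg (q + 1) j = xg (q + 1) j * (xg (q + 1) (i + q))⁻¹ := by
  rw [inv_mul_eq_iff_eq_mul, ← mul_assoc, eq_mul_inv_iff_mul_eq, xg_mul_xg_of_lt h]

/-- The set `{x_0, …, x_{p-1}}` with respect to which `wlen` measures length. -/
def generators (p : ℕ) : Set (FP p) := {g | ∃ i, i < p ∧ g = xg p i}

theorem closure_generators (hq : 1 ≤ q) : Subgroup.closure (generators (q + 1)) = ⊤ := by
  have h0 : xg (q + 1) 0 ∈ Subgroup.closure (generators (q + 1)) :=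
    Subgroup.subset_closure ⟨0, by omega, rfl⟩
  have hxg (n : ℕ) : xg (q + 1) n ∈ Subgroup.closure (generators (q + 1)) := by
    induction n using Nat.strong_induction_on with
    | _ n ih =>
      by_cases hn : n < q + 1
      · exact Subgroup.subset_closure ⟨n, hn, rfl⟩
      · have hconj := inv_xg_mul_xg_of_lt (q := q) (show 0 < n - q by omega)
        rw [show n - q + q = n by omega, ← mul_inv_eq_iff_eq_mul, inv_inv] at hconj
        rw [← hconj]
        exact mul_mem (mul_mem (inv_mem h0) (ih _ (by omega))) h0
  have hrange : Subgroup.closure (Set.range (xg (q + 1))) = ⊤ :=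
    PresentedGroup.closure_range_of (thompsonRels (q + 1))
  rw [← top_le_iff, ← hrange, Subgroup.closure_le]
  rintro _ ⟨n, rfl⟩
  exact hxg n

/-! ### Positive words and fractions -/

/-- The element `x_{a₁} ⋯ x_{aₙ}` of `F(q + 1)` represented by the list `[a₁, …, aₙ]`. -/
def posWord (q : ℕ) (A : List ℕ) : FP (q + 1) := (A.map (xg (q + 1))).prod

@[simp]
theorem posWord_nil : posWord q [] = 1 := rfl

@[simp]
theorem posWord_cons (a : ℕ) (A : List ℕ) :
    posWord q (a :: A) = xg (q + 1) a * posWord q A := by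
  simp [posWord]

@[simp]
theorem posWord_append (A B : List ℕ) : posWord q (A ++ B) = posWord q A * posWord q B := by
  simp [posWord]

/-- The quotient of two positive words; a normal form is such a quotient, with `B` listing the
letters of its negative part from right to left. -/
def fraction (q : ℕ) (A B : List ℕ) : FP (q + 1) := posWord q A * (posWord q B)⁻¹

theorem fraction_cons_left (i : ℕ) (A B : List ℕ) :
    fraction q (i :: A) B = xg (q + 1) i * fraction q A B := by
  simp [fraction, mul_assoc]

theorem fraction_cons_right (i : ℕ) (A B : List ℕ) :
    fraction q A (i :: B) = fraction q A B * (xg (q + 1) i)⁻¹ := by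
  simp [fraction, mul_assoc]

/-- The list of indices with each increased by `q`: the effect on positive words of conjugation
by a generator of smaller index. -/
def shiftWord (q : ℕ) (A : List ℕ) : List ℕ := A.map (· + q)

theorem mem_shiftWord {A : List ℕ} {b : ℕ} : b ∈ shiftWord q A ↔ ∃ a ∈ A, a + q = b :=
  List.mem_map

theorem shiftWord_append (A B : List ℕ) : shiftWord q (A ++ B) = shiftWord q A ++ shiftWord q B :=
  List.map_append

theorem pairwise_shiftWord {A : List ℕ} (h : A.Pairwise (· ≤ ·)) :
    (shiftWord q A).Pairwise (· ≤ ·) :=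
  h.map _ fun _ _ hab => Nat.add_le_add_right hab q

theorem posWord_mul_xg {i : ℕ} {A : List ℕ} (h : ∀ a ∈ A, i < a) :
    posWord q A * xg (q + 1) i = xg (q + 1) i * posWord q (shiftWord q A) := by
  induction A with
  | nil => simp [shiftWord]
  | cons a A ih =>
    rw [List.forall_mem_cons] at h
    rw [posWord_cons, mul_assoc, ih h.2, ← mul_assoc, xg_mul_xg_of_lt h.1, mul_assoc]
    simp only [shiftWord, List.map_cons, posWord_cons]

theorem fraction_eq_conj_shift {i : ℕ} {A B : List ℕ} (h : ∀ a ∈ A ++ B, i < a) :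
    fraction q A B =
      xg (q + 1) i * fraction q (shiftWord q A) (shiftWord q B) * (xg (q + 1) i)⁻¹ := by
  rw [List.forall_mem_append] at h
  have hA := eq_mul_inv_of_mul_eq (posWord_mul_xg (q := q) h.1)
  have hB := eq_mul_inv_of_mul_eq (posWord_mul_xg (q := q) h.2)
  rw [fraction, fraction, hA, hB]
  group

/-! ### The action on germs -/

/-- Right germs of the piecewise linear action on `[0, ∞)`, encoded symbolically: the integer part
of the base point, the base `q + 1` digits of its fractional part, and an integer `z` that stands
for the slope `(q + 1) ^ (-z)`. Digit streams are not identified when they represent the same real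
number. -/
abbrev Germ (q : ℕ) := ℕ × Stream' (Fin (q + 1)) × ℤ

/-- The action of `x_i⁻¹` on germs: it stretches `[i, i + 1]` by the factor `q + 1` and translates
`[i + 1, ∞)` by `q`. -/
def expand (i : ℕ) : Germ q → Germ q := fun (k, w, z) =>
  if k < i then (k, w, z)
  else if k = i then (i + w.head, w.tail, z - 1)
  else (k + q, w, z)

/-- The action of `x_i` on germs, inverse to `expand i`. -/
def contract (i : ℕ) : Germ q → Germ q := fun (k, w, z) =>
  if k < i then (k, w, z)
  else if h : k - i < q + 1 then (i, Stream'.cons ⟨k - i, h⟩ w, z + 1)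
  else (k - q, w, z)

theorem expand_contract (i : ℕ) (x : Germ q) : expand i (contract i x) = x := by
  obtain ⟨k, w, z⟩ := x
  rcases lt_or_ge k i with hk | hk
  · simp [contract, expand, hk]
  by_cases hd : k - i < q + 1
  · simp [contract, expand, hk.not_gt, hd, hk]
  · simp [contract, expand, hk.not_gt, hd, show ¬ k - q < i by omega, show k - q ≠ i by omega,
      show q ≤ k by omega]

theorem contract_expand (i : ℕ) (x : Germ q) : contract i (expand i x) = x := by
  obtain ⟨k, w, z⟩ := x
  rcases lt_trichotomy k i with hk | rfl | hk
  · simp [contract, expand, hk]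
  · simp [contract, expand, Stream'.eta, Nat.lt_succ_iff.1 w.head.2]
  · simp [contract, expand, hk.not_gt, hk.ne', show ¬ k + q < i by omega,
      show ¬ k + q - i < q + 1 by omega]

theorem expand_expand_of_lt {i j : ℕ} (h : i < j) (x : Germ q) :
    expand (j + q) (expand i x) = expand i (expand j x) := by
  obtain ⟨k, w, z⟩ := x
  have hdigit : (w.head : ℕ) < q + 1 := w.head.2
  rcases lt_trichotomy k i with hki | rfl | hik
  · simp [expand, hki, show k < j by omega, show k < j + q by omega]
  · simp [expand, h, show k + (w.head : ℕ) < j + q by omega]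
  rcases lt_trichotomy k j with hkj | rfl | hjk
  · simp [expand, hik.not_gt, hik.ne', hkj]
  · simp [expand, hik.not_gt, hik.ne', show ¬ k + (w.head : ℕ) < i by omega,
      show k + (w.head : ℕ) ≠ i by omega, add_right_comm]
  · simp [expand, hik.not_gt, hik.ne', hjk.not_gt, hjk.ne', show ¬ k + q < i by omega,
      show k + q ≠ i by omega]

/-- `contract i` as a permutation of germs. -/
def contractPerm (q i : ℕ) : Equiv.Perm (Germ q) where
  toFun := contract i
  invFun := expand i
  left_inv := expand_contract i
  right_inv := contract_expand i

theorem contractPerm_conj_of_lt {i j : ℕ} (h : i < j) :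
    (contractPerm q i)⁻¹ * contractPerm q j * contractPerm q i = contractPerm q (j + q) := by
  have hinv : (contractPerm q (j + q))⁻¹ * (contractPerm q i)⁻¹ =
      (contractPerm q i)⁻¹ * (contractPerm q j)⁻¹ :=
    Equiv.ext (expand_expand_of_lt h)
  rw [mul_assoc, inv_mul_eq_iff_eq_mul]
  exact (inv_injective (by simpa only [mul_inv_rev] using hinv)).symm

/-- The action of `F(q + 1)` on germs. -/
def germAction (q : ℕ) : FP (q + 1) →* Equiv.Perm (Germ q) :=
  PresentedGroup.toGroup (rels := thompsonRels (q + 1)) (f := contractPerm q) <| by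
    rintro _ ⟨i, j, hij, rfl⟩
    simp only [map_mul, map_inv, FreeGroup.lift_apply_of, mul_inv_eq_one]
    exact contractPerm_conj_of_lt hij

theorem germAction_xg (i : ℕ) : germAction q (xg (q + 1) i) = contractPerm q i :=
  PresentedGroup.toGroup.of _

/-- The element `x` fixes the point `i` with right slope `(q + 1) ^ (-n)`. The sign is chosen such
that `x_i` has log slope `1` at `i`. -/
def HasLogSlope (i : ℕ) (x : FP (q + 1)) (n : ℤ) : Prop :=
  ∀ z : ℤ, germAction q x (i, Stream'.const 0, z) = (i, Stream'.const 0, z + n)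

namespace HasLogSlope

variable {i : ℕ} {x y : FP (q + 1)} {m n : ℤ}

theorem one : HasLogSlope i (1 : FP (q + 1)) 0 := fun z => by simp

theorem mul (hx : HasLogSlope i x m) (hy : HasLogSlope i y n) : HasLogSlope i (x * y) (m + n) :=
  fun z => by rw [map_mul, Equiv.Perm.mul_apply, hy z, hx, add_assoc, add_comm n]

theorem inv (hx : HasLogSlope i x m) : HasLogSlope i x⁻¹ (-m) := fun z => by
  rw [map_inv, Equiv.Perm.inv_eq_iff_eq, hx, neg_add_cancel_right]

theorem unique (hm : HasLogSlope i x m) (hn : HasLogSlope i x n) : m = n := by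
  simpa [hm 0] using hn 0

end HasLogSlope

theorem hasLogSlope_xg {i j : ℕ} (h : i ≤ j) :
    HasLogSlope i (xg (q + 1) j) (if j = i then 1 else 0) := fun z => by
  rw [germAction_xg]
  change contract j (i, Stream'.const 0, z) = _
  rcases h.lt_or_eq with h | rfl
  · simp [contract, h, h.ne']
  · simpa [contract] using (Stream'.const_eq _).symm

theorem hasLogSlope_posWord {i : ℕ} {A : List ℕ} (h : ∀ a ∈ A, i ≤ a) :
    HasLogSlope i (posWord q A) (A.count i) := by
  induction A with
  | nil => exact HasLogSlope.one
  | cons a A ih =>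
    rw [List.forall_mem_cons] at h
    convert (hasLogSlope_xg (q := q) h.1).mul (ih h.2) using 1
    · exact posWord_cons a A
    · simp [List.count_cons, add_comm]

theorem hasLogSlope_fraction {i : ℕ} {A B : List ℕ} (h : ∀ a ∈ A ++ B, i ≤ a) :
    HasLogSlope i (fraction q A B) (A.count i - B.count i) := by
  rw [List.forall_mem_append] at h
  exact (hasLogSlope_posWord h.1).mul (hasLogSlope_posWord h.2).inv

theorem count_add_count_eq_of_fraction_eq {i : ℕ} {A B C D : List ℕ}
    (hAB : ∀ a ∈ A ++ B, i ≤ a) (hCD : ∀ a ∈ C ++ D, i ≤ a)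
    (h : fraction q A B = fraction q C D) :
    A.count i + D.count i = C.count i + B.count i := by
  have := (hasLogSlope_fraction hAB).unique (h ▸ hasLogSlope_fraction hCD)
  omega

/-! ### Reduced fractions -/

/-- The conditions on the index lists of the positive and the negative part of a normal form. -/
structure IsReduced (q : ℕ) (A B : List ℕ) : Prop where
  pairwise_left : A.Pairwise (· ≤ ·)
  pairwise_right : B.Pairwise (· ≤ ·)
  exists_mem : ∀ a ∈ A, a ∈ B → ∃ b ∈ A ++ B, a < b ∧ b ≤ a + q

namespace IsReduced

variable {A B : List ℕ} {i : ℕ}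

theorem symm (h : IsReduced q A B) : IsReduced q B A where
  pairwise_left := h.pairwise_right
  pairwise_right := h.pairwise_left
  exists_mem a haB haA := by
    simpa only [List.mem_append, or_comm] using h.exists_mem a haA haB

theorem of_cons_left (h : IsReduced q (i :: A) B) : IsReduced q A B where
  pairwise_left := h.pairwise_left.of_cons
  pairwise_right := h.pairwise_right
  exists_mem a haA haB := by
    obtain ⟨b, hb, hab, hbq⟩ := h.exists_mem a (List.mem_cons_of_mem i haA) haB
    have hbi : b ≠ i := (hab.trans_le' (List.rel_of_pairwise_cons h.pairwise_left haA)).ne'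
    exact ⟨b, (List.mem_cons.1 hb).resolve_left hbi, hab, hbq⟩

theorem of_cons_right (h : IsReduced q A (i :: B)) : IsReduced q A B :=
  h.symm.of_cons_left.symm

theorem shift (h : IsReduced q A B) : IsReduced q (shiftWord q A) (shiftWord q B) where
  pairwise_left := pairwise_shiftWord h.pairwise_left
  pairwise_right := pairwise_shiftWord h.pairwise_right
  exists_mem a haA haB := by
    obtain ⟨a, ha, rfl⟩ := mem_shiftWord.1 haA
    obtain ⟨a', ha', haa'⟩ := mem_shiftWord.1 haB
    obtain rfl := Nat.add_right_cancel haa'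
    obtain ⟨b, hb, hab, hbq⟩ := h.exists_mem a' ha ha'
    exact ⟨b + q, shiftWord_append A B ▸ mem_shiftWord.2 ⟨b, hb, rfl⟩, by omega, by omega⟩

end IsReduced

theorem eq_cons_of_fraction_eq_of_lt {i c : ℕ} {A B C D : List ℕ}
    (hA : A.Pairwise (· ≤ ·)) (hB : B.Pairwise (· ≤ ·))
    (hi : i ∈ A ++ B) (hmin : ∀ a ∈ A ++ B, i ≤ a)
    (hCD : ∀ a ∈ C ++ D, c ≤ a) (hic : i < c) (h : fraction q A B = fraction q C D) :
    ∃ A' B', A = i :: A' ∧ B = i :: B' := by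
  have hcount := count_add_count_eq_of_fraction_eq hmin (fun a ha => hic.le.trans (hCD a ha)) h
  have hiCD : i ∉ C ++ D := fun hi => (hCD i hi).not_gt hic
  rw [List.forall_mem_append] at hmin
  rw [List.mem_append] at hi hiCD
  have hiAB : i ∈ A ∧ i ∈ B := by
    simp only [← List.count_pos_iff] at *
    omega
  obtain ⟨A', hA'⟩ := exists_eq_cons_of_pairwise_le hA hmin.1 hiAB.1
  obtain ⟨B', hB'⟩ := exists_eq_cons_of_pairwise_le hB hmin.2 hiAB.2
  exact ⟨A', B', hA', hB'⟩

theorem IsReduced.forall_ge_of_fraction_eq {c : ℕ} {A B C D : List ℕ} (hred : IsReduced q A B)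
    (hCD : ∀ a ∈ C ++ D, c ≤ a) (h : fraction q A B = fraction q C D) :
    ∀ a ∈ A ++ B, c ≤ a := by
  by_contra! ⟨a, ha, hac⟩
  obtain ⟨i, hi, hmin⟩ := exists_mem_forall_mem_le (List.ne_nil_of_mem ha)
  have hic : i < c := (hmin a ha).trans_lt hac
  obtain ⟨A, B, rfl, rfl⟩ := eq_cons_of_fraction_eq_of_lt hred.pairwise_left hred.pairwise_right
    hi hmin hCD hic h
  have hconj : fraction q A B = fraction q (shiftWord q C) (shiftWord q D) := by
    rw [fraction_cons_left, fraction_cons_right, ← mul_assoc,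
      fraction_eq_conj_shift fun a ha => hic.trans_le (hCD a ha)] at h
    exact mul_left_cancel (mul_right_cancel h)
  have hshift : ∀ a ∈ shiftWord q C ++ shiftWord q D, c + q ≤ a := by
    rw [← shiftWord_append]
    intro b hb
    obtain ⟨a, ha, rfl⟩ := mem_shiftWord.1 hb
    exact Nat.add_le_add_right (hCD a ha) q
  have hge := hred.of_cons_left.of_cons_right.forall_ge_of_fraction_eq hshift hconj
  obtain ⟨b, hb, hib, hbq⟩ := hred.exists_mem i List.mem_cons_self List.mem_cons_self
  have hbAB : b ∈ A ++ B := by simpa [hib.ne'] using hb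
  have := hge b hbAB
  omega
termination_by A.length

theorem mem_and_mem_cases_of_fraction_eq {i : ℕ} {A B C D : List ℕ}
    (hAB : ∀ a ∈ A ++ B, i ≤ a) (hCD : ∀ a ∈ C ++ D, i ≤ a) (hi : i ∈ C ++ D)
    (h : fraction q A B = fraction q C D) :
    (i ∈ A ∧ i ∈ C) ∨ (i ∈ B ∧ i ∈ D) ∨ (i ∉ A ++ B ∧ i ∈ C ∧ i ∈ D) := by
  have hcount := count_add_count_eq_of_fraction_eq hAB hCD h
  simp only [← List.count_pos_iff, List.count_append] at *
  omega

theorem IsReduced.forall_le_of_fraction_eq {N : ℕ} {A B C D : List ℕ} (hred : IsReduced q A B)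
    (hC : C.Pairwise (· ≤ ·)) (hD : D.Pairwise (· ≤ ·)) (hN : ∀ a ∈ C ++ D, a ≤ N)
    (h : fraction q A B = fraction q C D) : ∀ a ∈ A ++ B, a ≤ N := by
  rcases eq_or_ne (C ++ D) [] with hnil | hne
  · intro a ha
    exact absurd (hred.forall_ge_of_fraction_eq (c := a + 1) (by simp [hnil]) h a ha) (by simp)
  obtain ⟨i, hi, hmin⟩ := exists_mem_forall_mem_le hne
  have hge := hred.forall_ge_of_fraction_eq hmin h
  have hcases := mem_and_mem_cases_of_fraction_eq hge hmin hi h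
  rw [List.forall_mem_append] at hmin
  rcases hcases with ⟨hiA, hiC⟩ | ⟨hiB, hiD⟩ | ⟨hiAB, hiC, hiD⟩
  · rw [List.forall_mem_append] at hge
    obtain ⟨A, rfl⟩ := exists_eq_cons_of_pairwise_le hred.pairwise_left hge.1 hiA
    obtain ⟨C, rfl⟩ := exists_eq_cons_of_pairwise_le hC hmin.1 hiC
    rw [fraction_cons_left, fraction_cons_left, mul_right_inj] at h
    rw [List.cons_append, List.forall_mem_cons] at hN ⊢
    exact ⟨hN.1, hred.of_cons_left.forall_le_of_fraction_eq hC.of_cons hD hN.2 h⟩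
  · rw [List.forall_mem_append] at hge
    obtain ⟨B, rfl⟩ := exists_eq_cons_of_pairwise_le hred.pairwise_right hge.2 hiB
    obtain ⟨D, rfl⟩ := exists_eq_cons_of_pairwise_le hD hmin.2 hiD
    rw [fraction_cons_right, fraction_cons_right, mul_left_inj] at h
    simp only [List.forall_mem_append, List.forall_mem_cons] at hN ⊢
    have hle := hred.of_cons_right.forall_le_of_fraction_eq hC hD.of_cons
      (List.forall_mem_append.2 ⟨hN.1, hN.2.2⟩) h
    rw [List.forall_mem_append] at hle
    exact ⟨hle.1, hN.2.1, hle.2⟩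
  · obtain ⟨C, rfl⟩ := exists_eq_cons_of_pairwise_le hC hmin.1 hiC
    obtain ⟨D, rfl⟩ := exists_eq_cons_of_pairwise_le hD hmin.2 hiD
    have hgt : ∀ a ∈ A ++ B, i < a := fun a ha =>
      (hge a ha).lt_of_ne (ne_of_mem_of_not_mem ha hiAB).symm
    rw [fraction_eq_conj_shift hgt, fraction_cons_left, fraction_cons_right, ← mul_assoc,
      mul_left_inj, mul_right_inj] at h
    have hle := hred.shift.forall_le_of_fraction_eq hC.of_cons hD.of_cons
      (fun a ha => hN a (((List.sublist_cons_self i C).append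
        (List.sublist_cons_self i D)).subset ha)) h
    intro a ha
    rw [← shiftWord_append] at hle
    exact (Nat.le_add_right a q).trans (hle _ (mem_shiftWord.2 ⟨a, ha, rfl⟩))
termination_by C.length + D.length

/-! ### Sorting positive words -/

/-- The largest value of `a + q * m` over the letters `a` of a positive word, where `m` is the
number of letters following `a`. Unlike the largest index, it does not grow when the word is
sorted: replacing `x_j x_i` by `x_i x_{j+q}` moves `x_j` one place to the right. -/
def weight (q : ℕ) : List ℕ → ℕ
  | [] => 0
  | a :: A => max (a + q * A.length) (weight q A)

theorem le_weight {A : List ℕ} : ∀ a ∈ A, a ≤ weight q A := by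
  induction A with
  | nil => simp
  | cons b A ih =>
    rw [List.forall_mem_cons]
    exact ⟨le_max_of_le_left (Nat.le_add_right _ _), fun a ha => le_max_of_le_right (ih a ha)⟩

theorem weight_append_le (A B : List ℕ) :
    weight q (A ++ B) ≤ max (weight q A + q * B.length) (weight q B) := by
  induction A with
  | nil => simp
  | cons a A ih =>
    simp only [List.cons_append, weight, List.length_append, mul_add]
    omega

/-- Insertion of a letter into a sorted positive word, from the left. -/
def insertLetter (q i : ℕ) : List ℕ → List ℕ
  | [] => [i]
  | b :: A => if i ≤ b then i :: b :: A else b :: insertLetter q (i + q) A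

theorem posWord_insertLetter (i : ℕ) (A : List ℕ) :
    posWord q (insertLetter q i A) = xg (q + 1) i * posWord q A := by
  induction A generalizing i with
  | nil => simp [insertLetter]
  | cons b A ih =>
    rw [insertLetter]
    split_ifs with hib
    · exact posWord_cons i (b :: A)
    · rw [posWord_cons, posWord_cons, ih, ← mul_assoc, ← mul_assoc,
        xg_mul_xg_of_lt (not_le.1 hib)]

theorem length_insertLetter (i : ℕ) (A : List ℕ) :
    (insertLetter q i A).length = A.length + 1 := by
  induction A generalizing i with
  | nil => rfl
  | cons b A ih =>
    rw [insertLetter]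
    split_ifs <;> simp [ih]

theorem weight_insertLetter (i : ℕ) (A : List ℕ) :
    weight q (insertLetter q i A) = weight q (i :: A) := by
  induction A generalizing i with
  | nil => rfl
  | cons b A ih =>
    rw [insertLetter]
    split_ifs
    · rfl
    · simp only [weight, ih, length_insertLetter, List.length_cons, mul_add]
      omega

theorem forall_ge_insertLetter {c i : ℕ} {A : List ℕ} (hi : c ≤ i) (hA : ∀ a ∈ A, c ≤ a) :
    ∀ a ∈ insertLetter q i A, c ≤ a := by
  induction A generalizing i with
  | nil => simpa [insertLetter] using hi
  | cons b A ih =>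
    rw [List.forall_mem_cons] at hA
    rw [insertLetter]
    split_ifs
    · simpa using ⟨hi, hA⟩
    · simpa using ⟨hA.1, ih (Nat.le_add_right_of_le hi) hA.2⟩

theorem pairwise_insertLetter (i : ℕ) {A : List ℕ} (hA : A.Pairwise (· ≤ ·)) :
    (insertLetter q i A).Pairwise (· ≤ ·) := by
  induction A generalizing i with
  | nil => simp [insertLetter]
  | cons b A ih =>
    have ⟨hbA, hA'⟩ := List.pairwise_cons.1 hA
    rw [insertLetter]
    split_ifs with hib
    · refine List.pairwise_cons.2 ⟨List.forall_mem_cons.2 ⟨hib, fun a ha => ?_⟩, hA⟩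
      exact hib.trans (hbA a ha)
    · exact List.pairwise_cons.2 ⟨forall_ge_insertLetter (by omega) hbA, ih (i + q) hA'⟩

/-- Insertion sort of a positive word by means of the relations `x_j x_i = x_i x_{j+q}`. -/
def sortWord (q : ℕ) (A : List ℕ) : List ℕ := A.foldr (insertLetter q) []

theorem posWord_sortWord (A : List ℕ) : posWord q (sortWord q A) = posWord q A := by
  induction A with
  | nil => rfl
  | cons a A ih => simpa [sortWord, posWord_insertLetter] using ih

theorem length_sortWord (A : List ℕ) : (sortWord q A).length = A.length := by
  induction A with
  | nil => rfl
  | cons a A ih => simpa [sortWord, length_insertLetter] using ih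

theorem weight_sortWord (A : List ℕ) : weight q (sortWord q A) = weight q A := by
  induction A with
  | nil => rfl
  | cons a A ih =>
    rw [weight, ← length_sortWord A, ← ih]
    exact weight_insertLetter a _

theorem pairwise_sortWord (A : List ℕ) : (sortWord q A).Pairwise (· ≤ ·) := by
  induction A with
  | nil => exact List.Pairwise.nil
  | cons a A ih => exact pairwise_insertLetter a ih

/-! ### From words to fractions -/

theorem exists_inv_xg_mul_posWord_eq_fraction (i : ℕ) (A : List ℕ) :
    ∃ A' B', (xg (q + 1) i)⁻¹ * posWord q A = fraction q A' B' ∧ A'.length ≤ A.length ∧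
      weight q A' ≤ weight q A + q ∧ B'.length ≤ 1 ∧ weight q B' ≤ i + q * A.length := by
  induction A generalizing i with
  | nil => exact ⟨[], [i], by simp [fraction], by simp [weight]⟩
  | cons b A ih =>
    have hlen {A' : List ℕ} (hA' : A'.length ≤ A.length) := Nat.mul_le_mul_left q hA'
    simp only [posWord_cons, ← mul_assoc, List.length_cons, mul_add]
    rcases lt_trichotomy b i with hbi | rfl | hib
    · obtain ⟨A', B', heq, hA', hwA', hB', hwB'⟩ := ih (i + q)
      refine ⟨b :: A', B', ?_, ?_, ?_, hB', ?_⟩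
      · rw [inv_xg_mul_xg_of_gt hbi, mul_assoc, heq, fraction_cons_left]
      · simpa using hA'
      · have := hlen hA'
        simp only [weight]
        omega
      · omega
    · refine ⟨A, [], ?_, ?_⟩
      · simp [fraction]
      · simp only [weight, List.length_nil]
        omega
    · obtain ⟨A', B', heq, hA', hwA', hB', hwB'⟩ := ih i
      refine ⟨(b + q) :: A', B', ?_, ?_, ?_, hB', ?_⟩
      · rw [inv_xg_mul_xg_of_lt hib, mul_assoc, heq, fraction_cons_left]
      · simpa using hA'
      · have := hlen hA'
        simp only [weight]
        omega
      · omega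

theorem exists_prod_eq_fraction {w : List (FP (q + 1))}
    (hw : ∀ g ∈ w, g ∈ generators (q + 1) ∨ g⁻¹ ∈ generators (q + 1)) :
    ∃ C D, w.prod = fraction q C D ∧ C.length ≤ w.length ∧
      weight q C ≤ q * w.length ∧ weight q D ≤ q * w.length := by
  induction w with
  | nil => exact ⟨[], [], by simp [fraction], by simp [weight]⟩
  | cons g w ih =>
    rw [List.forall_mem_cons] at hw
    obtain ⟨C, D, heq, hC, hwC, hwD⟩ := ih hw.2
    have hqC := Nat.mul_le_mul_left q hC
    simp only [List.prod_cons, heq, List.length_cons, mul_add, mul_one]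
    rcases hw.1 with ⟨i, hi, rfl⟩ | ⟨i, hi, hg⟩
    · refine ⟨i :: C, D, (fraction_cons_left i C D).symm, by simpa using hC, ?_, by omega⟩
      simp only [weight]
      omega
    · obtain ⟨C', B, hCB, hC', hwC', hB, hwB⟩ := exists_inv_xg_mul_posWord_eq_fraction (q := q) i C
      refine ⟨C', D ++ B, ?_, by omega, by omega, ?_⟩
      · rw [inv_eq_iff_eq_inv.1 hg, fraction, ← mul_assoc, hCB]
        simp [fraction, mul_assoc]
      · have := weight_append_le (q := q) D B
        have := Nat.mul_le_mul_left q hB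
        omega

theorem exists_eq_fraction_forall_le_wlen (hq : 1 ≤ q) (x : FP (q + 1)) :
    ∃ C D, x = fraction q C D ∧ C.Pairwise (· ≤ ·) ∧ D.Pairwise (· ≤ ·) ∧
      ∀ a ∈ C ++ D, a ≤ q * wlen (q + 1) x := by
  obtain ⟨w, hlen, hw, rfl⟩ := exists_length_eq_wordLength (closure_generators hq) x
  obtain ⟨C, D, heq, -, hC, hD⟩ := exists_prod_eq_fraction hw
  rw [hlen] at hC hD
  refine ⟨sortWord q C, sortWord q D, ?_, pairwise_sortWord C, pairwise_sortWord D, ?_⟩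
  · simp only [heq, fraction, posWord_sortWord]
  · rw [List.forall_mem_append]
    exact ⟨fun a ha => (le_weight a ha).trans ((weight_sortWord C).trans_le hC),
      fun a ha => (le_weight a ha).trans ((weight_sortWord D).trans_le hD)⟩

/-! ### Normal forms -/

/-- The letters of the positive word `x_{i_1}^{r_1} ⋯ x_{i_n}^{r_n}`, with repetition. -/
def letters {n : ℕ} (i r : Fin n → ℕ) : List ℕ :=
  (List.ofFn fun k => List.replicate (r k) (i k)).flatten

theorem posWord_letters {n : ℕ} (i r : Fin n → ℕ) :
    posWord q (letters i r) = (List.ofFn fun k => xg (q + 1) (i k) ^ r k).prod := by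
  simp [posWord, letters, List.map_flatten, List.prod_flatten, List.map_ofFn,
    Function.comp_def]

theorem mem_letters {n : ℕ} {i r : Fin n → ℕ} (hr : ∀ k, 1 ≤ r k) {a : ℕ} :
    a ∈ letters i r ↔ ∃ k, i k = a := by
  have hr' (k : Fin n) : r k ≠ 0 := Nat.one_le_iff_ne_zero.1 (hr k)
  simp [letters, hr', eq_comm]

theorem pairwise_letters {n : ℕ} {i : Fin n → ℕ} (hi : Monotone i) (r : Fin n → ℕ) :
    (letters i r).Pairwise (· ≤ ·) := by
  rw [letters, List.pairwise_flatten, List.pairwise_ofFn]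
  refine ⟨?_, fun k l hkl a ha b hb => ?_⟩
  · simp [List.pairwise_replicate]
  · rw [List.eq_of_mem_replicate ha, List.eq_of_mem_replicate hb]
    exact hi hkl.le

end FP

namespace NFData

open FP

variable {q : ℕ} {d : NFData (q + 1)}

theorem elem_eq_fraction :
    d.elem = fraction q (letters d.i d.r) (letters d.j d.s) := by
  rw [fraction, posWord_letters, posWord_letters, elem]

theorem IsNormalFormOf.isReduced {x : FP (q + 1)} (hd : d.IsNormalFormOf x) :
    IsReduced q (letters d.i d.r) (letters d.j d.s) := by
  obtain ⟨hi, hj, hr, hs, -, hred, -⟩ := hd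
  refine ⟨pairwise_letters hi.monotone d.r, pairwise_letters hj.monotone d.s, ?_⟩
  simp only [List.mem_append, mem_letters hr, mem_letters hs]
  intro a hai haj
  obtain ⟨b, hab, hbq, hb⟩ := hred a hai haj
  exact ⟨b, hb, hab, hbq⟩

theorem IsNormalFormOf.index_le_mul_wlen (hq : 1 ≤ q) {x : FP (q + 1)} (hd : d.IsNormalFormOf x) :
    (∀ k, d.i k ≤ q * wlen (q + 1) x) ∧ ∀ l, d.j l ≤ q * wlen (q + 1) x := by
  obtain ⟨C, D, hx, hC, hD, hCD⟩ := exists_eq_fraction_forall_le_wlen hq x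
  have hred := hd.isReduced
  obtain ⟨-, -, hr, hs, -, -, hxd⟩ := hd
  have hle := hred.forall_le_of_fraction_eq hC hD hCD (by rw [← elem_eq_fraction, ← hxd, hx])
  rw [List.forall_mem_append] at hle
  exact ⟨fun k => hle.1 _ ((mem_letters hr).2 ⟨k, rfl⟩),
    fun l => hle.2 _ ((mem_letters hs).2 ⟨l, rfl⟩)⟩

end NFData

/-- The largest indices `iₙ`, `jₘ` appearing in the normal form of
`x ∈ F(p)` are bounded by `(p-1)·|x|_p`. -/
theorem statement17 (p : ℕ) (hp : 2 ≤ p) (x : FP p) (d : NFData p)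
    (hd : d.IsNormalFormOf x) :
    (∀ hn : 0 < d.n, d.i ⟨d.n - 1, Nat.sub_lt hn Nat.one_pos⟩ ≤ (p - 1) * wlen p x) ∧
      ∀ hm : 0 < d.m, d.j ⟨d.m - 1, Nat.sub_lt hm Nat.one_pos⟩ ≤ (p - 1) * wlen p x := by
  obtain ⟨q, rfl⟩ : ∃ q, p = q + 1 := ⟨p - 1, by omega⟩
  have hle := hd.index_le_mul_wlen (by omega)
  exact ⟨fun _ => hle.1 _, fun _ => hle.2 _⟩
end
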